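/- (Lemma 4.1.) Let V_1, …, V_d be pairwise disjoint sets covering V and let p_1, …, p_d be fully separable topic influence probability functions with respect to this partition. Let λ_1, …, λ_d ∈ [0,1] and p = Σ_{j=1}^{d} λ_j p_j (pointwise). Then for every topic i, every v ∈ V_i, and every S ⊆ V: MI(v | S, λ_i p_i) = MI(v | S, p), i.e., σ(S ∪ {v}, λ_i p_i) − σ(S, λ_i p_i) = σ(S ∪ {v}, p) − σ(S, p). -/

import Mathlib

open scoped Classical

/-- Weight of a live-edge set `L` under influence probability function `p`:
the product over all ordered pairs `(u,v)` with `u ≠ v` of `p u v` if the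
edge is live and `1 - p u v` otherwise. -/
noncomputable def edgeWeight {V : Type*} [Fintype V] [DecidableEq V]
    (p : V → V → ℝ) (L : Finset (V × V)) : ℝ :=
  ∏ e ∈ (Finset.univ : Finset V).offDiag, (if e ∈ L then p e.1 e.2 else 1 - p e.1 e.2)

/-- The set of vertices reachable from some vertex of `S` via edges of the
live-edge set `L` (reflexive–transitive closure). -/
noncomputable def reachSet {V : Type*} [Fintype V] [DecidableEq V]
    (S : Finset V) (L : Finset (V × V)) : Finset V :=
  Finset.univ.filter (fun x => ∃ s ∈ S, Relation.ReflTransGen (fun a b => (a, b) ∈ L) s x)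

/-- Influence spread `σ(S, p)`: the sum over all live-edge sets `L`
(subsets of the off-diagonal pairs) of `w(p,L) * |R(S,L)|`. -/
noncomputable def infSpread {V : Type*} [Fintype V] [DecidableEq V]
    (S : Finset V) (p : V → V → ℝ) : ℝ :=
  ∑ L ∈ ((Finset.univ : Finset V).offDiag).powerset, edgeWeight p L * (reachSet S L).card

/-- Marginal influence `MI(v | S, p) = σ(S ∪ {v}, p) − σ(S, p)`. -/
noncomputable def marginInf {V : Type*} [Fintype V] [DecidableEq V]
    (v : V) (S : Finset V) (p : V → V → ℝ) : ℝ :=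
  infSpread (insert v S) p - infSpread S p

/-!
Under a live-edge set `L`, adding `v` to `S` gains the vertices of `R({v}, L) \ R(S, L)`. If no
edge joins the part `P` of `v` to its complement, then `R({v}, L) ⊆ P`, and which vertices of `P`
are reached from `S` depends only on the edges of `L` inside `P`. The edges outside `P` can
therefore be summed out, each contributing a factor `p + (1 - p) = 1`, so the marginal influence
of `v` depends only on the values of `p` inside `P`, where the mixture reduces to its `i`-th term.
-/

section RandomSubset

variable {α R : Type*} [DecidableEq α] [CommRing R]

/-- The weight of the outcome `t` when each `a ∈ s` is selected independently with probability
`f a`; elements of `t` outside `s` are ignored, and the values of `f` are arbitrary. -/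
def selectionWeight (f : α → R) (s t : Finset α) : R :=
  ∏ a ∈ s, if a ∈ t then f a else 1 - f a

theorem selectionWeight_insert_left (f : α → R) {s : Finset α} {a : α} (has : a ∉ s)
    (t : Finset α) :
    selectionWeight f (insert a s) t = (if a ∈ t then f a else 1 - f a) * selectionWeight f s t :=
  Finset.prod_insert has

theorem selectionWeight_insert_right (f : α → R) {s : Finset α} {a : α} (has : a ∉ s)
    (t : Finset α) : selectionWeight f s (insert a t) = selectionWeight f s t :=
  Finset.prod_congr rfl fun b hb => by
    simp only [Finset.mem_insert, ne_of_mem_of_not_mem hb has, false_or]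

theorem selectionWeight_insert_add_selectionWeight_insert (f : α → R) {s t : Finset α} {a : α}
    (has : a ∉ s) (hat : a ∉ t) :
    selectionWeight f (insert a s) t + selectionWeight f (insert a s) (insert a t) =
      selectionWeight f s t := by
  rw [selectionWeight_insert_left f has, selectionWeight_insert_left f has,
    selectionWeight_insert_right f has, if_neg hat, if_pos (Finset.mem_insert_self a t)]
  ring

theorem sum_selectionWeight_insert_mul_inter (f : α → R) (h : Finset α → R) {s u : Finset α}
    {a : α} (has : a ∉ s) (hau : a ∉ u) :
    ∑ t ∈ (insert a s).powerset, selectionWeight f (insert a s) t * h (t ∩ u) =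
      ∑ t ∈ s.powerset, selectionWeight f s t * h (t ∩ u) := by
  rw [Finset.sum_powerset_insert has, ← Finset.sum_add_distrib]
  refine Finset.sum_congr rfl fun t ht => ?_
  rw [Finset.insert_inter_of_notMem hau, ← add_mul,
    selectionWeight_insert_add_selectionWeight_insert f has
      (Finset.notMem_of_mem_powerset_of_notMem ht has)]

theorem sum_selectionWeight_mul_inter (f : α → R) (h : Finset α → R) {s u : Finset α}
    (hus : u ⊆ s) :
    ∑ t ∈ s.powerset, selectionWeight f s t * h (t ∩ u) =
      ∑ t ∈ u.powerset, selectionWeight f u t * h t := by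
  suffices ∀ w : Finset α, Disjoint w u →
      ∑ t ∈ (w ∪ u).powerset, selectionWeight f (w ∪ u) t * h (t ∩ u) =
        ∑ t ∈ u.powerset, selectionWeight f u t * h t by
    simpa only [Finset.sdiff_union_of_subset hus] using this (s \ u) Finset.sdiff_disjoint
  intro w
  induction w using Finset.induction_on with
  | empty =>
    intro _
    rw [Finset.empty_union]
    exact Finset.sum_congr rfl fun t ht => by
      rw [Finset.inter_eq_left.mpr (Finset.mem_powerset.mp ht)]
  | insert a w haw ih =>
    intro hdisj
    obtain ⟨hau, hwu⟩ := Finset.disjoint_insert_left.mp hdisj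
    rw [Finset.insert_union, sum_selectionWeight_insert_mul_inter f h
      (Finset.notMem_union.mpr ⟨haw, hau⟩) hau, ih hwu]

end RandomSubset

section Isolation

variable {α : Type*} {r r' : α → α → Prop} {s : Set α} {a b : α}

/-- `s` is isolated under `r` if `r` relates no element of `s` to an element outside `s`, in either
direction; that is, `s` is a union of weakly connected components of the directed graph `r`. -/
def IsIsolated (r : α → α → Prop) (s : Set α) : Prop :=
  ∀ ⦃a b⦄, r a b → (a ∈ s ↔ b ∈ s)

theorem IsIsolated.reflTransGen (hr : IsIsolated r s) :
    IsIsolated (Relation.ReflTransGen r) s := by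
  intro a b hab
  induction hab with
  | refl => rfl
  | tail _ hbc ih => exact ih.trans (hr hbc)

theorem IsIsolated.reflTransGen_of_forall_mem (hr : IsIsolated r s)
    (hrr' : ∀ a ∈ s, ∀ b ∈ s, r a b → r' a b) (hb : b ∈ s) (hab : Relation.ReflTransGen r a b) :
    Relation.ReflTransGen r' a b := by
  induction hab using Relation.ReflTransGen.head_induction_on with
  | refl => rfl
  | head hac hcb ih =>
    have hc := (hr.reflTransGen hcb).mpr hb
    exact ih.head (hrr' _ ((hr hac).mpr hc) _ hc hac)

end Isolation

section Influence

variable {V : Type*} [Fintype V] [DecidableEq V] {P S : Finset V} {v : V}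
  {L L' : Finset (V × V)} {p q : V → V → ℝ}

theorem mem_reachSet {x : V} :
    x ∈ reachSet S L ↔ ∃ s ∈ S, Relation.ReflTransGen (fun a b => (a, b) ∈ L) s x := by
  simp only [reachSet, Finset.mem_filter_univ]

theorem reachSet_union (S T : Finset V) (L : Finset (V × V)) :
    reachSet (S ∪ T) L = reachSet S L ∪ reachSet T L := by
  ext x
  simp only [mem_reachSet, Finset.mem_union, or_and_right, exists_or]

theorem reachSet_subset (hL : IsIsolated (fun a b => (a, b) ∈ L) (P : Set V)) (hSP : S ⊆ P) :
    reachSet S L ⊆ P := by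
  intro x hx
  obtain ⟨s, hs, hsx⟩ := mem_reachSet.mp hx
  exact (hL.reflTransGen hsx).mp (hSP hs)

theorem reachSet_inter_subset_reachSet (hL : IsIsolated (fun a b => (a, b) ∈ L) (P : Set V))
    (hLL' : ∀ a ∈ P, ∀ b ∈ P, (a, b) ∈ L → (a, b) ∈ L') (S : Finset V) :
    reachSet S L ∩ P ⊆ reachSet S L' := by
  intro x hx
  obtain ⟨hxS, hxP⟩ := Finset.mem_inter.mp hx
  obtain ⟨s, hs, hsx⟩ := mem_reachSet.mp hxS
  exact mem_reachSet.mpr ⟨s, hs, hL.reflTransGen_of_forall_mem hLL' hxP hsx⟩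

theorem reachSet_inter_congr (hL : IsIsolated (fun a b => (a, b) ∈ L) (P : Set V))
    (hL' : IsIsolated (fun a b => (a, b) ∈ L') (P : Set V))
    (hLL' : ∀ a ∈ P, ∀ b ∈ P, ((a, b) ∈ L ↔ (a, b) ∈ L')) (S : Finset V) :
    reachSet S L ∩ P = reachSet S L' ∩ P :=
  subset_antisymm
    (Finset.subset_inter (reachSet_inter_subset_reachSet hL
      (fun a ha b hb => (hLL' a ha b hb).mp) S) Finset.inter_subset_right)
    (Finset.subset_inter (reachSet_inter_subset_reachSet hL'
      (fun a ha b hb => (hLL' a ha b hb).mpr) S) Finset.inter_subset_right)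

/-- The vertices gained by adding `v` to the seed set `S` under the live-edge set `L`; the marginal
influence of `v` is the expected size of this set. -/
noncomputable def newlyReached (v : V) (S : Finset V) (L : Finset (V × V)) : Finset V :=
  reachSet {v} L \ reachSet S L

theorem card_newlyReached_add_card_reachSet (v : V) (S : Finset V) (L : Finset (V × V)) :
    (newlyReached v S L).card + (reachSet S L).card = (reachSet (insert v S) L).card := by
  rw [newlyReached, Finset.card_sdiff_add_card, ← reachSet_union, ← Finset.insert_eq]

theorem newlyReached_congr (hv : v ∈ P) (hL : IsIsolated (fun a b => (a, b) ∈ L) (P : Set V))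
    (hL' : IsIsolated (fun a b => (a, b) ∈ L') (P : Set V))
    (hLL' : ∀ a ∈ P, ∀ b ∈ P, ((a, b) ∈ L ↔ (a, b) ∈ L')) (S : Finset V) :
    newlyReached v S L = newlyReached v S L' := by
  have within {M : Finset (V × V)} (hM : IsIsolated (fun a b => (a, b) ∈ M) (P : Set V)) :
      newlyReached v S M = (reachSet {v} M ∩ P) \ (reachSet S M ∩ P) := by
    have hsub : newlyReached v S M ⊆ P :=
      Finset.sdiff_subset.trans (reachSet_subset hM (Finset.singleton_subset_iff.mpr hv))
    calc newlyReached v S M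
      _ = (reachSet {v} M \ reachSet S M) ∩ P := (Finset.inter_eq_left.mpr hsub).symm
      _ = (reachSet {v} M ∩ P) \ (reachSet S M ∩ P) := inf_sdiff_distrib_right _ _ _
  rw [within hL, within hL', reachSet_inter_congr hL hL' hLL', reachSet_inter_congr hL hL' hLL']

theorem newlyReached_inter_offDiag (hv : v ∈ P)
    (hL : IsIsolated (fun a b => (a, b) ∈ L) (P : Set V))
    (hdiag : L ⊆ (Finset.univ : Finset V).offDiag) (S : Finset V) :
    newlyReached v S (L ∩ P.offDiag) = newlyReached v S L := by
  refine newlyReached_congr hv (fun a b hab => hL (Finset.mem_inter.mp hab).1) hL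
    (fun a ha b hb => ⟨fun hab => (Finset.mem_inter.mp hab).1, fun hab => ?_⟩) S
  exact Finset.mem_inter.mpr
    ⟨hab, Finset.mem_offDiag.mpr ⟨ha, hb, (Finset.mem_offDiag.mp (hdiag hab)).2.2⟩⟩

theorem edgeWeight_eq_selectionWeight (p : V → V → ℝ) (L : Finset (V × V)) :
    edgeWeight p L = selectionWeight (fun e => p e.1 e.2) (Finset.univ : Finset V).offDiag L :=
  rfl

theorem ne_zero_of_edgeWeight_ne_zero (hdiag : L ⊆ (Finset.univ : Finset V).offDiag)
    (hw : edgeWeight p L ≠ 0) {a b : V} (hab : (a, b) ∈ L) : p a b ≠ 0 := by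
  have hfactor := Finset.prod_ne_zero_iff.mp hw (a, b) (hdiag hab)
  rwa [if_pos hab] at hfactor

theorem marginInf_eq_sum_edgeWeight (v : V) (S : Finset V) (p : V → V → ℝ) :
    marginInf v S p = ∑ L ∈ (Finset.univ : Finset V).offDiag.powerset,
      edgeWeight p L * (newlyReached v S L).card := by
  rw [marginInf, infSpread, infSpread, ← Finset.sum_sub_distrib]
  refine Finset.sum_congr rfl fun L _ => ?_
  rw [← card_newlyReached_add_card_reachSet, ← mul_sub, Nat.cast_add, add_sub_cancel_right]

theorem marginInf_eq_sum_offDiag (hp : IsIsolated (fun a b => p a b ≠ 0) (P : Set V)) (hv : v ∈ P)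
    (S : Finset V) :
    marginInf v S p = ∑ L ∈ P.offDiag.powerset,
      selectionWeight (fun e => p e.1 e.2) P.offDiag L * (newlyReached v S L).card := by
  rw [marginInf_eq_sum_edgeWeight, ← sum_selectionWeight_mul_inter (fun e : V × V => p e.1 e.2)
    (fun L => ((newlyReached v S L).card : ℝ)) (Finset.offDiag_mono (Finset.subset_univ P))]
  refine Finset.sum_congr rfl fun L hL => ?_
  rw [← edgeWeight_eq_selectionWeight]
  obtain hw | hw := eq_or_ne (edgeWeight p L) 0
  · rw [hw, zero_mul, zero_mul]
  · have hdiag := Finset.mem_powerset.mp hL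
    have hisol : IsIsolated (fun a b => (a, b) ∈ L) (P : Set V) :=
      fun a b hab => hp (ne_zero_of_edgeWeight_ne_zero hdiag hw hab)
    rw [newlyReached_inter_offDiag hv hisol hdiag]

theorem marginInf_congr (hp : IsIsolated (fun a b => p a b ≠ 0) (P : Set V))
    (hq : IsIsolated (fun a b => q a b ≠ 0) (P : Set V))
    (hpq : ∀ e ∈ P.offDiag, p e.1 e.2 = q e.1 e.2) (hv : v ∈ P) (S : Finset V) :
    marginInf v S p = marginInf v S q := by
  rw [marginInf_eq_sum_offDiag hp hv, marginInf_eq_sum_offDiag hq hv]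
  refine Finset.sum_congr rfl fun L _ => ?_
  rw [selectionWeight, selectionWeight, Finset.prod_congr rfl fun e he => by rw [hpq e he]]

end Influence

section Separable

variable {V ι R : Type*} {parts : ι → Finset V}

/-- The topic functions `pt` are fully separable with respect to `parts`: topic `i` is supported on
pairs inside `parts i`. That the parts are disjoint is not included. -/
def FullySeparable [Zero R] (parts : ι → Finset V) (pt : ι → V → V → R) : Prop :=
  ∀ i u v, pt i u v ≠ 0 → u ∈ parts i ∧ v ∈ parts i

theorem FullySeparable.isIsolated [Zero R] {pt : ι → V → V → R} (hsep : FullySeparable parts pt)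
    (hdisj : Pairwise (Function.onFun Disjoint parts)) (i j : ι) :
    IsIsolated (fun u v => pt j u v ≠ 0) (parts i : Set V) := by
  intro u v huv
  obtain ⟨hu, hv⟩ := hsep j u v huv
  obtain rfl | hij := eq_or_ne i j
  · exact iff_of_true hu hv
  · exact iff_of_false (Finset.disjoint_right.mp (hdisj hij) hu)
      (Finset.disjoint_right.mp (hdisj hij) hv)

variable [Fintype ι] [NonUnitalNonAssocSemiring R] {pt : ι → V → V → R}

theorem FullySeparable.isIsolated_sum_mul (hsep : FullySeparable parts pt)
    (hdisj : Pairwise (Function.onFun Disjoint parts)) (lam : ι → R) (i : ι) :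
    IsIsolated (fun u v => ∑ j, lam j * pt j u v ≠ 0) (parts i : Set V) := by
  intro u v huv
  obtain ⟨j, _, hj⟩ := Finset.exists_ne_zero_of_sum_ne_zero huv
  exact hsep.isIsolated hdisj i j (right_ne_zero_of_mul hj)

theorem FullySeparable.sum_mul_eq (hsep : FullySeparable parts pt)
    (hdisj : Pairwise (Function.onFun Disjoint parts)) (lam : ι → R) {i : ι} {u : V}
    (hu : u ∈ parts i) (v : V) : ∑ j, lam j * pt j u v = lam i * pt i u v := by
  refine Fintype.sum_eq_single i fun j hji => ?_
  have hzero : pt j u v = 0 := by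
    by_contra hne
    exact Finset.disjoint_left.mp (hdisj hji) (hsep j u v hne).1 hu
  rw [hzero, mul_zero]

end Separable

theorem marginInf_separable_general {V ι : Type*} [Fintype V] [DecidableEq V] [Fintype ι]
    {parts : ι → Finset V} (hdisj : Pairwise (Function.onFun Disjoint parts))
    {pt : ι → V → V → ℝ} (hsep : FullySeparable parts pt) (lam : ι → ℝ) {i : ι} {v : V}
    (hv : v ∈ parts i) (S : Finset V) :
    marginInf v S (fun u w => lam i * pt i u w) =
      marginInf v S (fun u w => ∑ j, lam j * pt j u w) :=
  marginInf_congr (P := parts i)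
    (fun _ _ huw => hsep.isIsolated hdisj i i (right_ne_zero_of_mul huw))
    (hsep.isIsolated_sum_mul hdisj lam i)
    (fun e he => (hsep.sum_mul_eq hdisj lam (Finset.mem_offDiag.mp he).1 e.2).symm) hv S

/-- Lemma 4.1: in a fully separable network, the marginal influence of a node in
its own topic equals its marginal influence in the mixture. -/
theorem marginInf_separable {V : Type*} [Fintype V] [DecidableEq V] {d : ℕ}
    (parts : Fin d → Finset V)
    (hdisj : ∀ i j, i ≠ j → Disjoint (parts i) (parts j))
    (hcover : ∀ x : V, ∃ i, x ∈ parts i)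
    (pt : Fin d → V → V → ℝ)
    (hpt1 : ∀ i u v, 0 ≤ pt i u v ∧ pt i u v ≤ 1) (hpt2 : ∀ i v, pt i v v = 0)
    (hsep : ∀ i u v, pt i u v ≠ 0 → u ∈ parts i ∧ v ∈ parts i)
    (lam : Fin d → ℝ) (hlam : ∀ i, 0 ≤ lam i ∧ lam i ≤ 1)
    (p : V → V → ℝ) (hpdef : ∀ u w, p u w = ∑ j, lam j * pt j u w) :
    ∀ i : Fin d, ∀ v ∈ parts i, ∀ S : Finset V,
      marginInf v S (fun u w => lam i * pt i u w) = marginInf v S p := by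
  obtain rfl : p = fun u w => ∑ j, lam j * pt j u w := funext₂ hpdef
  exact fun i v hv S => marginInf_separable_general hdisj hsep lam hv S
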